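/- For every prime p and automorphism φ of ℤ^d, the group G = ℤ ⋉_φ ℤ^d has a normal subgroup N such that N is residually p and G/N is finite cyclic. -/

import Mathlib

/-- The action of `ℤ` on `ℤ^d` where `1` acts by `φ`. -/
def sdAct (d : ℕ) (φ : (Fin d → ℤ) ≃ₗ[ℤ] (Fin d → ℤ)) :
    Multiplicative ℤ →* MulAut (Multiplicative (Fin d → ℤ)) :=
  zpowersHom _ (AddEquiv.toMultiplicative φ.toAddEquiv)

/-- The mapping torus `ℤ ⋉_φ ℤ^d`. -/
abbrev MapTorus (d : ℕ) (φ : (Fin d → ℤ) ≃ₗ[ℤ] (Fin d → ℤ)) :=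
  Multiplicative (Fin d → ℤ) ⋊[sdAct d φ] Multiplicative ℤ

/-- A group is residually `p` if every nontrivial element is detected by a homomorphism
to a finite `p`-group. -/
def ResiduallyP (p : ℕ) (G : Type*) [Group G] : Prop :=
  ∀ g : G, g ≠ 1 → ∃ (P : Type) (_ : Group P) (_ : Finite P) (f : G →* P),
    IsPGroup p P ∧ f g ≠ 1

/-!
Let `Q` act on an abelian group `A` that is residually `p` and has `A / A ^ p` finite, and let `K`
be the kernel of the action of `Q` on `A / A ^ p`; we take `N = A ⋊ K`. An automorphism of `A`
that is trivial modulo `A ^ p` has `p ^ n`-th power trivial modulo `A ^ (p ^ n)`. Hence `N` has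
image of `p`-power exponent in the holomorph of the finite group `A / A ^ (p ^ n)`. These images
detect the nontrivial elements of `A`, and the other elements of `N` are detected in `Q`.
-/

theorem exists_hom_finite_pGroup_of_isPGroup_range {p : ℕ} {G H : Type*} [Group G] [Group H]
    {f : G →* H} [Finite f.range] (hf : IsPGroup p f.range) {g : G} (hg : f g ≠ 1) :
    ∃ (P : Type) (_ : Group P) (_ : Finite P) (u : G →* P), IsPGroup p P ∧ u g ≠ 1 := by
  -- `Shrink` moves the image of `f` into `Type`, the universe required by `ResiduallyP`.
  let e : f.range ≃* Shrink.{0} f.range := Shrink.mulEquiv.symm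
  refine ⟨Shrink.{0} f.range, inferInstance, inferInstance,
    e.toMonoidHom.comp f.rangeRestrict, hf.of_equiv e, fun h => hg ?_⟩
  exact congrArg Subtype.val (e.map_eq_one_iff.mp h)

namespace ResiduallyP

variable {p : ℕ} {G : Type*} [Group G]

theorem of_forall_exists_hom {H : Type*} [Group H] (hH : ResiduallyP p H)
    (h : ∀ g : G, g ≠ 1 → ∃ f : G →* H, f g ≠ 1) : ResiduallyP p G := by
  intro g hg
  obtain ⟨f, hfg⟩ := h g hg
  obtain ⟨P, _, _, u, hP, hu⟩ := hH (f g) hfg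
  exact ⟨P, _, ‹_›, u.comp f, hP, hu⟩

theorem multiplicative_int (hp : 1 < p) : ResiduallyP p (Multiplicative ℤ) := by
  intro g hg
  let n := g.toAdd.natAbs
  have : NeZero (p ^ n) := ⟨pow_ne_zero n (by omega)⟩
  refine ⟨Multiplicative (ZMod (p ^ n)), inferInstance, inferInstance,
    (Int.castAddHom (ZMod (p ^ n))).toMultiplicative, IsPGroup.of_card (n := n) (by simp), ?_⟩
  intro h
  have hdvd : p ^ n ∣ n :=
    Int.natCast_dvd.mp ((ZMod.intCast_zmod_eq_zero_iff_dvd g.toAdd (p ^ n)).mp h)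
  exact (Nat.lt_pow_self hp).not_ge (Nat.le_of_dvd (Int.natAbs_pos.mpr hg) hdvd)

theorem multiplicative_pi_int {ι : Type*} (hp : 1 < p) :
    ResiduallyP p (Multiplicative (ι → ℤ)) := by
  refine of_forall_exists_hom (multiplicative_int hp) fun v hv => ?_
  obtain ⟨i, hi⟩ := Function.ne_iff.mp (show v.toAdd ≠ 0 from hv)
  exact ⟨(Pi.evalAddMonoidHom (fun _ : ι => ℤ) i).toMultiplicative, hi⟩

end ResiduallyP

section PowSubgroup

variable {A : Type*} [CommGroup A]

/-- The subgroup `A ^ m` of `m`-th powers of an abelian group. -/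
abbrev powSubgroup (A : Type*) [CommGroup A] (m : ℕ) : Subgroup A :=
  (powMonoidHom m : A →* A).range

theorem ResiduallyP.exists_notMem_powSubgroup {p : ℕ} (hA : ResiduallyP p A) {a : A}
    (ha : a ≠ 1) : ∃ n, a ∉ powSubgroup A (p ^ n) := by
  obtain ⟨P, _, _, f, hP, hfa⟩ := hA a ha
  obtain ⟨n, hn⟩ := isPGroup_iff_exists_pow_pow_eq_one.mp hP
  refine ⟨n, ?_⟩
  rintro ⟨b, rfl⟩
  exact hfa ((map_pow f b _).trans (hn (f b)))

theorem powSubgroup_mul (m n : ℕ) :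
    powSubgroup A (m * n) = (powSubgroup A m).map (powMonoidHom n) := by
  rw [MonoidHom.map_range]
  exact congrArg MonoidHom.range (MonoidHom.ext fun a => pow_mul a m n)

theorem finiteIndex_powSubgroup_pow {m : ℕ} (hm : (powSubgroup A m).FiniteIndex) (n : ℕ) :
    (powSubgroup A (m ^ n)).FiniteIndex := by
  induction n with
  | zero =>
    have : powSubgroup A (m ^ 0) = ⊤ := by
      rw [pow_zero]
      exact MonoidHom.range_eq_top.mpr fun a => ⟨a, pow_one a⟩
    rw [this]
    infer_instance
  | succ n ih =>
    have : (powSubgroup A (m ^ n) ⊔ (powMonoidHom m : A →* A).ker).FiniteIndex :=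
      Subgroup.finiteIndex_of_le le_sup_left
    rw [pow_succ, powSubgroup_mul, Subgroup.finiteIndex_iff, Subgroup.index_map]
    exact mul_ne_zero this.index_ne_zero hm.index_ne_zero

end PowSubgroup

theorem mulAut_pow_apply_of_apply_eq_mul {M : Type*} [Monoid M] {α : MulAut M} {x c : M}
    (hx : α x = x * c) (hc : α c = c) (n : ℕ) : (α ^ n) x = x * c ^ n := by
  induction n with
  | zero => simp
  | succ n ih =>
    rw [pow_succ', MulAut.mul_apply, ih, map_mul, map_pow, hx, hc, mul_assoc, pow_succ']

section AutModPow

variable {A : Type*} [CommGroup A]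

/-- The reduction homomorphism `Aut A → Aut (A / A ^ m)`. Its kernel consists of the automorphisms
that are trivial modulo `m`-th powers. -/
def autModPow (A : Type*) [CommGroup A] (m : ℕ) :
    MulAut A →* MulAut (A ⧸ powSubgroup A m) where
  toFun α := QuotientGroup.congr _ _ α (MulEquiv.map_range_powMonoidHom α m)
  map_one' := by
    ext x
    induction x using QuotientGroup.induction_on
    rfl
  map_mul' α β := by
    ext x
    induction x using QuotientGroup.induction_on
    rfl

@[simp]
theorem autModPow_apply_mk (m : ℕ) (α : MulAut A) (a : A) :
    autModPow A m α (a : A ⧸ powSubgroup A m) = (α a : A ⧸ powSubgroup A m) :=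
  rfl

theorem mem_ker_autModPow_iff {m : ℕ} {α : MulAut A} :
    α ∈ (autModPow A m).ker ↔ ∀ a, ∃ c, α a = a * c ^ m := by
  rw [MonoidHom.mem_ker, MulEquiv.ext_iff, QuotientGroup.forall_mk]
  refine forall_congr' fun a => ?_
  rw [autModPow_apply_mk, MulAut.one_apply, eq_comm, QuotientGroup.eq]
  refine exists_congr fun c => ?_
  rw [powMonoidHom_apply, eq_inv_mul_iff_mul_eq, eq_comm]

theorem pow_mem_ker_autModPow_mul {m r : ℕ} {α : MulAut A} (hm : α ∈ (autModPow A m).ker)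
    (hr : α ∈ (autModPow A r).ker) : α ^ r ∈ (autModPow A (m * r)).ker := by
  rw [MonoidHom.mem_ker, map_pow]
  ext x
  obtain ⟨a, rfl⟩ := QuotientGroup.mk_surjective x
  obtain ⟨c, hc⟩ := mem_ker_autModPow_iff.mp hm a
  obtain ⟨e, he⟩ := mem_ker_autModPow_iff.mp hr c
  have pow_eq_one (b : A) : ((b ^ (m * r) : A) : A ⧸ powSubgroup A (m * r)) = 1 :=
    (QuotientGroup.eq_one_iff _).mpr ⟨b, rfl⟩
  have hfix : autModPow A (m * r) α (c ^ m : A) = (c ^ m : A) := by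
    rw [autModPow_apply_mk, map_pow, he, mul_pow, ← pow_mul, mul_comm r m, QuotientGroup.mk_mul,
      pow_eq_one, mul_one]
  have hmul : autModPow A (m * r) α a = a * (c ^ m : A) := by
    rw [autModPow_apply_mk, hc, QuotientGroup.mk_mul]
  rw [mulAut_pow_apply_of_apply_eq_mul hmul hfix, ← QuotientGroup.mk_pow, ← pow_mul, pow_eq_one,
    mul_one, MulAut.one_apply]

theorem pow_pow_mem_ker_autModPow_pow {p : ℕ} {α : MulAut A} (hα : α ∈ (autModPow A p).ker)
    (n : ℕ) : α ^ p ^ n ∈ (autModPow A (p ^ n)).ker := by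
  induction n with
  | zero => exact mem_ker_autModPow_iff.mpr fun a => ⟨a⁻¹ * (α ^ p ^ 0) a, by simp⟩
  | succ n ih =>
    rw [pow_succ, pow_mul]
    exact pow_mem_ker_autModPow_mul ih (pow_mem hα _)

end AutModPow

section CongruenceSubgroup

open SemidirectProduct

variable {A Q : Type*} [CommGroup A] [Group Q] {ρ : Q →* MulAut A} {p : ℕ}

/-- The homomorphism from `A ⋊ Q` to the holomorph of `A / A ^ m`, which detects the elements of `A`
outside `A ^ m`. -/
def toHolomorphModPow (ρ : Q →* MulAut A) (m : ℕ) :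
    A ⋊[ρ] Q →* (A ⧸ powSubgroup A m) ⋊[MonoidHom.id _] MulAut (A ⧸ powSubgroup A m) :=
  SemidirectProduct.map (QuotientGroup.mk' _) ((autModPow A m).comp ρ) fun _ => rfl

/-- The subgroup `A ⋊ K` of `A ⋊ Q`, where `K` consists of the elements of `Q` acting trivially on
`A / A ^ m`; it is encoded as the kernel of the action of `A ⋊ Q` on `A / A ^ m` through `Q`. -/
def congruenceSubgroup (ρ : Q →* MulAut A) (m : ℕ) : Subgroup (A ⋊[ρ] Q) :=
  (((autModPow A m).comp ρ).comp rightHom).ker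

instance normal_congruenceSubgroup (m : ℕ) : (congruenceSubgroup ρ m).Normal :=
  MonoidHom.normal_ker _

theorem finite_quotient_congruenceSubgroup (m : ℕ) [(powSubgroup A m).FiniteIndex] :
    Finite ((A ⋊[ρ] Q) ⧸ congruenceSubgroup ρ m) :=
  Finite.of_injective _ (QuotientGroup.kerLift_injective (((autModPow A m).comp ρ).comp rightHom))

theorem isCyclic_quotient_congruenceSubgroup [IsCyclic Q] (m : ℕ) :
    IsCyclic ((A ⋊[ρ] Q) ⧸ congruenceSubgroup ρ m) := by
  refine isCyclic_of_surjective ((QuotientGroup.mk' (congruenceSubgroup ρ m)).comp inr) fun x => ?_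
  obtain ⟨g, rfl⟩ := QuotientGroup.mk_surjective x
  exact ⟨g.right, QuotientGroup.eq.mpr (by simp [congruenceSubgroup, MonoidHom.mem_ker])⟩

theorem toHolomorphModPow_pow_eq_one {g : A ⋊[ρ] Q} (hg : g ∈ congruenceSubgroup ρ p) (n : ℕ) :
    toHolomorphModPow ρ (p ^ n) g ^ p ^ (n + n) = 1 := by
  have hright : rightHom (toHolomorphModPow ρ (p ^ n) g ^ p ^ n) = 1 := by
    rw [map_pow]
    exact (map_pow (autModPow A (p ^ n)) _ _).symm.trans (pow_pow_mem_ker_autModPow_pow hg n)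
  obtain ⟨x, hx⟩ := range_inl_eq_ker_rightHom.ge hright
  obtain ⟨a, rfl⟩ := QuotientGroup.mk_surjective x
  have ha : (a : A ⧸ powSubgroup A (p ^ n)) ^ p ^ n = 1 :=
    (QuotientGroup.eq_one_iff _).mpr ⟨a, rfl⟩
  rw [pow_add, pow_mul, ← hx, ← map_pow, ha, map_one]

theorem isPGroup_range_toHolomorphModPow_comp_subtype (n : ℕ) :
    IsPGroup p ((toHolomorphModPow ρ (p ^ n)).comp (congruenceSubgroup ρ p).subtype).range := by
  rintro ⟨_, g, rfl⟩
  exact ⟨n + n, Subtype.ext (toHolomorphModPow_pow_eq_one g.2 n)⟩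

theorem residuallyP_congruenceSubgroup (hA : ResiduallyP p A) (hQ : ResiduallyP p Q)
    (hfin : (powSubgroup A p).FiniteIndex) : ResiduallyP p (congruenceSubgroup ρ p) := by
  intro g hg
  by_cases hright : g.1.right = 1
  · have hleft : g.1.left ≠ 1 := fun h => hg (Subtype.ext (SemidirectProduct.ext h hright))
    obtain ⟨n, hn⟩ := hA.exists_notMem_powSubgroup hleft
    have := finiteIndex_powSubgroup_pow hfin n
    have : Finite ((A ⧸ powSubgroup A (p ^ n)) ⋊[MonoidHom.id _]
        MulAut (A ⧸ powSubgroup A (p ^ n))) := Finite.of_equiv _ equivProd.symm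
    refine exists_hom_finite_pGroup_of_isPGroup_range
      (isPGroup_range_toHolomorphModPow_comp_subtype n) fun h => hn ?_
    exact (QuotientGroup.eq_one_iff _).mp (congrArg SemidirectProduct.left h)
  · obtain ⟨P, _, _, f, hP, hf⟩ := hQ g.1.right hright
    exact ⟨P, _, ‹_›, f.comp (rightHom.comp (congruenceSubgroup ρ p).subtype), hP, hf⟩

end CongruenceSubgroup

theorem residually_p_by_finite_cyclic_general {A Q : Type*} [CommGroup A] [Group Q] [IsCyclic Q]
    (ρ : Q →* MulAut A) {p : ℕ} (hA : ResiduallyP p A) (hQ : ResiduallyP p Q)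
    (hfin : (powSubgroup A p).FiniteIndex) :
    ∃ N : Subgroup (A ⋊[ρ] Q), ∃ _ : N.Normal,
      ResiduallyP p N ∧ Finite ((A ⋊[ρ] Q) ⧸ N) ∧ IsCyclic ((A ⋊[ρ] Q) ⧸ N) :=
  ⟨congruenceSubgroup ρ p, inferInstance, residuallyP_congruenceSubgroup hA hQ hfin,
    finite_quotient_congruenceSubgroup p, isCyclic_quotient_congruenceSubgroup p⟩

theorem residually_p_by_finite_cyclic (d : ℕ) (φ : (Fin d → ℤ) ≃ₗ[ℤ] (Fin d → ℤ))
    (p : ℕ) (hp : p.Prime) :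
    ∃ N : Subgroup (MapTorus d φ), ∃ _ : N.Normal,
      ResiduallyP p N ∧ Finite (MapTorus d φ ⧸ N) ∧ IsCyclic (MapTorus d φ ⧸ N) := by
  exact residually_p_by_finite_cyclic_general (sdAct d φ) (.multiplicative_pi_int hp.one_lt)
    (.multiplicative_int hp.one_lt) (Subgroup.finiteIndex_range_powMonoidHom_of_fg _ hp.ne_zero)
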